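/- arXiv:1305.4840 — 3 statements merged into one kernel-verified Lean document; each statement's English description precedes it below -/
import Mathlib

section
/- Let C_1, C_2 be linear codes in F_q^n, both with full support (equivalently, both dual codes have minimum distance at least 2). Then dim(C_1 * C_2) ≥ min(n, dim(C_1) + dmin(C_2^⊥) - 2), where C_2^⊥ is the dual code of C_2 and dmin denotes minimum distance. -/
noncomputable section

/-- The componentwise product code of two linear codes. -/
def prodCode (F : Type*) [Field F] {n : ℕ}
    (C C' : Submodule F (Fin n → F)) : Submodule F (Fin n → F) :=
  Submodule.span F {z | ∃ c ∈ C, ∃ c' ∈ C', z = c * c'}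

/-- The t-fold componentwise power of a code (convention: 0th power is ⊤). -/
def powCode (F : Type*) [Field F] {n : ℕ} (C : Submodule F (Fin n → F)) :
    ℕ → Submodule F (Fin n → F)
  | 0 => ⊤
  | 1 => C
  | (t+2) => prodCode F (powCode F C (t+1)) C

/-- Minimum distance: minimum Hamming weight of a nonzero codeword. -/
def dmin {F : Type*} [Field F] [DecidableEq F] {n : ℕ}
    (C : Submodule F (Fin n → F)) : ℕ :=
  sInf {w | ∃ c ∈ C, c ≠ 0 ∧ hammingNorm c = w}

/-- The dual code with respect to the standard bilinear form. -/
def dualCode (F : Type*) [Field F] {n : ℕ}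
    (C : Submodule F (Fin n → F)) : Submodule F (Fin n → F) where
  carrier := {x | ∀ c ∈ C, ∑ i, x i * c i = 0}
  zero_mem' := by intro c hc; simp
  add_mem' := by
    intro a b ha hb c hc
    have h : ∑ i, (a + b) i * c i = (∑ i, a i * c i) + ∑ i, b i * c i := by
      simp [add_mul, Finset.sum_add_distrib]
    simp only [Set.mem_setOf_eq] at *
    rw [h, ha c hc, hb c hc, add_zero]
  smul_mem' := by
    intro r a ha c hc
    simp only [Pi.smul_apply, smul_eq_mul, mul_assoc, ← Finset.mul_sum, Set.mem_setOf_eq] at *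
    rw [ha c hc, mul_zero]

/-- A code has full support if every coordinate carries a nonzero codeword value. -/
def fullSupport (F : Type*) [Field F] {n : ℕ} (C : Submodule F (Fin n → F)) : Prop :=
  ∀ j, ∃ c ∈ C, c j ≠ 0

/-- Product code of a family of codes. -/
def prodFamily (F : Type*) [Field F] {n t : ℕ}
    (C : Fin t → Submodule F (Fin n → F)) : Submodule F (Fin n → F) :=
  Submodule.span F {z | ∃ c : Fin t → (Fin n → F), (∀ i, c i ∈ C i) ∧ z = ∏ i, c i}


theorem aux_card_le {F : Type*} [Field F] {n : ℕ} (P : Submodule F (Fin n → F))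
    (S : Finset (Fin n))
    (h : ∀ i ∈ S, ∃ p ∈ P, ∀ s ∈ S, p s = if s = i then 1 else 0) :
    S.card ≤ Module.finrank F P := by
  classical
  choose! p hp hs using h
  let v : S → P := fun i => ⟨p i, hp i i.2⟩
  have hv : LinearIndependent F v := by
    let g : P →ₗ[F] (S → F) := (LinearMap.funLeft F F (Subtype.val : S → Fin n)).comp P.subtype
    apply LinearIndependent.of_comp g
    have : g ∘ v = fun i => Pi.single i (1 : F) := by
      funext i s
      have := hs i i.2 s s.2
      simp only [Function.comp, g, v, LinearMap.comp_apply, LinearMap.funLeft_apply,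
        Submodule.subtype_apply, this, Pi.single_apply, Subtype.ext_iff]
    rw [this]
    exact Pi.linearIndependent_single_one S F
  simpa using hv.fintype_card_le_finrank

theorem aux_dual {F : Type*} [Field F] {n : ℕ} (C : Submodule F (Fin n → F))
    (S : Finset (Fin n))
    (h : ∀ x ∈ dualCode F C, (∀ j, j ∉ S → x j = 0) → x = 0) (i : Fin n) (hi : i ∈ S) :
    ∃ c ∈ C, ∀ s ∈ S, c s = if s = i then 1 else 0 := by
  classical
  let Z : Submodule F (Fin n → F) :=
    { carrier := {v | ∀ s ∈ S, v s = 0}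
      zero_mem' := by intro s _; rfl
      add_mem' := by
        intro a b ha hb s hs
        simp [ha s hs, hb s hs]
      smul_mem' := by
        intro r a ha s hs
        simp [ha s hs] }
  by_cases hm : Pi.single i (1 : F) ∈ C ⊔ Z
  · obtain ⟨c, hc, z, hz, e⟩ := Submodule.mem_sup.1 hm
    refine ⟨c, hc, fun s hs => ?_⟩
    have := congrFun e s
    have hz' : z s = 0 := hz s hs
    simpa [hz', Pi.single_apply] using this
  · exfalso
    obtain ⟨f, hf, hle⟩ := Submodule.exists_le_ker_of_notMem hm
    have key : ∀ c : Fin n → F, f c = ∑ j, f (Pi.single j 1) * c j := by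
      intro c
      conv_lhs => rw [← Finset.univ_sum_single c]
      rw [map_sum]
      refine Finset.sum_congr rfl fun j _ => ?_
      have : (Pi.single j (c j) : Fin n → F) = c j • Pi.single j 1 := by
        rw [← Pi.single_smul]; simp
      rw [this, map_smul, smul_eq_mul, mul_comm]
    have h0 := h (fun j => f (Pi.single j 1)) ?_ ?_
    · exact hf (congrFun h0 i)
    · intro c hc
      rw [← key]
      exact hle (Submodule.mem_sup_left hc)
    · intro j hj
      apply hle
      apply Submodule.mem_sup_right
      intro s hs
      have : s ≠ j := fun e => hj (e ▸ hs)
      simp [this]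

theorem aux_info {F : Type*} [Field F] {n : ℕ} (C : Submodule F (Fin n → F)) :
    ∃ I : Finset (Fin n), Module.finrank F C ≤ I.card ∧
      ∀ i ∈ I, ∃ c ∈ C, ∀ s ∈ I, c s = if s = i then 1 else 0 := by
  classical
  let A : Finset (Finset (Fin n)) := Finset.univ.filter fun I =>
    ∀ i ∈ I, ∃ c ∈ C, ∀ s ∈ I, c s = if s = i then 1 else 0
  obtain ⟨I, hI, hmax⟩ := Finset.exists_max_image A Finset.card ⟨∅, by simp [A]⟩
  have hI' : ∀ i ∈ I, ∃ c ∈ C, ∀ s ∈ I, c s = if s = i then 1 else 0 := by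
    simpa [A] using hI
  refine ⟨I, ?_, hI'⟩
  let g : C →ₗ[F] (I → F) := (LinearMap.funLeft F F (Subtype.val : I → Fin n)).comp C.subtype
  have hg : Function.Injective g := by
    rw [← LinearMap.ker_eq_bot, LinearMap.ker_eq_bot']
    rintro ⟨c, hc⟩ h0
    have hz : ∀ s ∈ I, c s = 0 := fun s hs => congrFun h0 ⟨s, hs⟩
    by_contra hne
    have : ∃ j, c j ≠ 0 := by
      by_contra! hall
      exact hne (Subtype.ext (funext hall))
    obtain ⟨j, hj⟩ := this
    have hjI : j ∉ I := fun h => hj (hz j h)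
    have hmem : insert j I ∈ A := by
      simp only [A, Finset.mem_filter, Finset.mem_univ, true_and]
      intro i hi
      by_cases hij : i = j
      · subst hij
        refine ⟨(c i)⁻¹ • c, C.smul_mem _ hc, fun s hs => ?_⟩
        by_cases hs' : s = i
        · subst hs'; simp [hj]
        · have := hz s (Finset.mem_of_mem_insert_of_ne hs hs')
          simp [this, hs']
      · have hi' := Finset.mem_of_mem_insert_of_ne hi hij
        obtain ⟨b, hb, hbs⟩ := hI' i hi'
        refine ⟨b - (b j * (c j)⁻¹) • c, C.sub_mem hb (C.smul_mem _ hc), fun s hs => ?_⟩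
        by_cases hs' : s = j
        · subst hs'; simp [hj, Ne.symm hij]
        · have hsI := Finset.mem_of_mem_insert_of_ne hs hs'
          simp [hz s hsI, hbs s hsI]
    have := hmax _ hmem
    rw [Finset.card_insert_of_notMem hjI] at this
    omega
  simpa using LinearMap.finrank_le_finrank_of_injective hg

theorem aux_main {F : Type*} [Field F] {n : ℕ} (C₁ C₂ : Submodule F (Fin n → F))
    (h1 : fullSupport F C₁) (I J : Finset (Fin n)) (hIJ : Disjoint I J)
    (hI : ∀ i ∈ I, ∃ c ∈ C₁, ∀ s ∈ I, c s = if s = i then 1 else 0)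
    (hJ : ∀ i, ∃ c ∈ C₂, c i = 1 ∧ ∀ s ∈ J, s ≠ i → c s = 0) :
    (I ∪ J).card ≤ Module.finrank F (prodCode F C₁ C₂) := by
  classical
  have hprod : ∀ a ∈ C₁, ∀ b ∈ C₂, a * b ∈ prodCode F C₁ C₂ := fun a ha b hb =>
    Submodule.subset_span ⟨a, ha, b, hb, rfl⟩
  have HI : ∀ i ∈ I, ∃ p ∈ prodCode F C₁ C₂, ∀ s ∈ I ∪ J, p s = if s = i then 1 else 0 := by
    intro i hi
    obtain ⟨a, ha, has⟩ := hI i hi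
    obtain ⟨b, hb, hbi, hbs⟩ := hJ i
    refine ⟨a * b, hprod a ha b hb, fun s hs => ?_⟩
    rcases Finset.mem_union.1 hs with hs | hs
    · by_cases e : s = i
      · subst e; simp [has s hs, hbi]
      · simp [has s hs, e]
    · have e : s ≠ i := fun e => Finset.disjoint_left.1 hIJ hi (e ▸ hs)
      simp [hbs s hs e, e]
  apply aux_card_le
  intro i hi
  rcases Finset.mem_union.1 hi with hi | hi
  · exact HI i hi
  choose! p hp hps using HI
  obtain ⟨a, ha, hai⟩ := h1 i
  obtain ⟨b, hb, hbi, hbs⟩ := hJ i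
  let q := (a i)⁻¹ • (a * b)
  have hq : q ∈ prodCode F C₁ C₂ := Submodule.smul_mem _ _ (hprod a ha b hb)
  refine ⟨q - ∑ k ∈ I, q k • p k,
    Submodule.sub_mem _ hq (Submodule.sum_mem _ fun k hk => Submodule.smul_mem _ _ (hp k hk)),
    fun s hs => ?_⟩
  have hsum : (∑ k ∈ I, q k • p k) s = if s ∈ I then q s else 0 := by
    rw [Finset.sum_apply, ← Finset.sum_ite_eq I s q]
    refine Finset.sum_congr rfl fun k hk => ?_
    simp [hps k hk s hs]
  rw [Pi.sub_apply, hsum]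
  rcases Finset.mem_union.1 hs with hs | hs
  · have e : s ≠ i := fun e => Finset.disjoint_left.1 hIJ hs (e ▸ hi)
    simp [hs, e]
  · have hsI : s ∉ I := fun h => Finset.disjoint_left.1 hIJ h hs
    by_cases e : s = i
    · subst e; simp [hsI, q, hai, hbi]
    · simp [hsI, q, e, hbs s hs e]

theorem stmt1 {F : Type*} [Field F] [Fintype F] [DecidableEq F] {n : ℕ}
    (C₁ C₂ : Submodule F (Fin n → F))
    (h1 : fullSupport F C₁) (h2 : fullSupport F C₂) :
    min (n : ℤ) ((Module.finrank F C₁ : ℤ) + (dmin (dualCode F C₂) : ℤ) - 2)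
      ≤ (Module.finrank F (prodCode F C₁ C₂) : ℤ) := by
  classical
  obtain ⟨I, hcard, hI⟩ := aux_info C₁
  obtain ⟨J, hJsub, hJcard⟩ := Finset.exists_subset_card_eq
    (s := Iᶜ) (n := min (dmin (dualCode F C₂) - 2) (Iᶜ).card) (min_le_right _ _)
  have hIJ : Disjoint I J := Finset.disjoint_right.2 fun s hs => Finset.mem_compl.1 (hJsub hs)
  have hle : I.card ≤ n := by simpa using Finset.card_le_univ I
  have hmain := aux_main C₁ C₂ h1 I J hIJ hI ?_
  · rw [Finset.card_union_of_disjoint hIJ, hJcard, Finset.card_compl, Fintype.card_fin] at hmain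
    omega
  intro i
  rcases J.eq_empty_or_nonempty with rfl | hne
  · obtain ⟨c, hc, hci⟩ := h2 i
    exact ⟨(c i)⁻¹ • c, C₂.smul_mem _ hc, by simp [hci], by simp⟩
  · have hpos := hne.card_pos
    have hz : ∀ x ∈ dualCode F C₂, (∀ j, j ∉ insert i J → x j = 0) → x = 0 := by
      intro x hx hxs
      by_contra hx0
      have hd : dmin (dualCode F C₂) ≤ hammingNorm x := Nat.sInf_le ⟨x, hx, hx0, rfl⟩
      have hw : hammingNorm x ≤ (insert i J).card := by
        unfold hammingNorm
        apply Finset.card_le_card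
        intro s hs
        by_contra hcon
        exact (Finset.mem_filter.1 hs).2 (hxs s hcon)
      have := Finset.card_insert_le i J
      omega
    obtain ⟨c, hc, hcs⟩ := aux_dual C₂ (insert i J) hz i (Finset.mem_insert_self _ _)
    · refine ⟨c, hc, by simp [hcs i (Finset.mem_insert_self _ _)], fun s hs e => ?_⟩
      simp [hcs s (Finset.mem_insert_of_mem hs), e]


end
end

section
/- Let t ≥ 2 and let C ⊆ F_q^n be a linear code of dimension k such that the t-th power code C^(t) is nonzero. Then dmin(C^(t)) ≤ max(t - 1, n + t - t·k). -/
noncomputable section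

theorem aux_part {α ι : Type*} [DecidableEq α] [Fintype ι] [DecidableEq ι] [Nonempty ι]
    (r : ι → Finset α → ℤ)
    (mono : ∀ i S T, S ⊆ T → r i S ≤ r i T)
    (sub : ∀ i S T, r i (S ∪ T) + r i (S ∩ T) ≤ r i S + r i T) :
    ∀ (R : Finset α) (A : ι → Finset α),
      (∀ S ⊆ R, (S.card : ℤ) + ∑ i, ((A i).card : ℤ) ≤ ∑ i, r i (S ∪ A i)) →
      ∃ B : ι → Finset α, (∀ i, A i ⊆ B i) ∧ (∀ e ∈ R, ∃ i, e ∈ B i) ∧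
        ∑ i, ((B i).card : ℤ) ≤ ∑ i, r i (B i) := by
  intro R
  induction R using Finset.induction_on with
  | empty =>
    intro A h
    refine ⟨A, fun i => subset_rfl, by simp, ?_⟩
    simpa using h ∅ subset_rfl
  | insert e R he ih =>
    intro A h
    by_cases hex : ∃ i, ∀ S ⊆ R, (S.card : ℤ) + ∑ l, ((A l).card : ℤ) + 1 ≤
        ∑ l, r l (S ∪ Function.update A i (insert e (A i)) l)
    · obtain ⟨i, hi⟩ := hex
      have hc : ∑ l, ((Function.update A i (insert e (A i)) l).card : ℤ)
          ≤ ∑ l, ((A l).card : ℤ) + 1 := by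
        have h1 : ∀ l, ((Function.update A i (insert e (A i)) l).card : ℤ)
            ≤ ((A l).card : ℤ) + if l = i then 1 else 0 := by
          intro l
          by_cases hl : l = i
          · subst hl
            have := Finset.card_insert_le e (A l)
            simp only [Function.update_self, if_true]
            exact_mod_cast this
          · simp [hl]
        refine (Finset.sum_le_sum fun l _ => h1 l).trans ?_
        rw [Finset.sum_add_distrib]
        simp
      obtain ⟨B, hB1, hB2, hB3⟩ := ih (Function.update A i (insert e (A i))) (by
        intro S hS
        have := hi S hS
        linarith)
      refine ⟨B, ?_, ?_, hB3⟩
      · intro l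
        have := hB1 l
        by_cases hl : l = i
        · subst hl
          rw [Function.update_self] at this
          exact (Finset.subset_insert _ _).trans this
        · rwa [Function.update_of_ne hl] at this
      · intro x hx
        rcases Finset.mem_insert.1 hx with rfl | hx
        · refine ⟨i, hB1 i ?_⟩
          simp
        · exact hB2 x hx
    · exfalso
      push Not at hex
      have hS : ∀ i, ∃ S ⊆ R, ∑ l, r l (S ∪ A l) ≤ (S.card : ℤ) + ∑ l, ((A l).card : ℤ) ∧
          r i (insert e (S ∪ A i)) ≤ r i (S ∪ A i) := by
        intro i
        obtain ⟨S, hSR, hlt⟩ := hex i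
        have h0 := h S (hSR.trans (Finset.subset_insert _ _))
        have e1 : ∑ l, r l (S ∪ Function.update A i (insert e (A i)) l)
            = ∑ l, r l (S ∪ A l) + (r i (insert e (S ∪ A i)) - r i (S ∪ A i)) := by
          have : ∀ l, r l (S ∪ Function.update A i (insert e (A i)) l) = r l (S ∪ A l) +
              if l = i then (r i (insert e (S ∪ A i)) - r i (S ∪ A i)) else 0 := by
            intro l
            by_cases hl : l = i
            · subst hl
              simp [Finset.union_insert]
            · simp [hl]
          rw [Finset.sum_congr rfl fun l _ => this l, Finset.sum_add_distrib]
          simp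
        have m := mono i (S ∪ A i) (insert e (S ∪ A i)) (Finset.subset_insert _ _)
        exact ⟨S, hSR, by linarith, by linarith⟩
      have key : ∀ J : Finset ι, ∃ S ⊆ R,
          ∑ l, r l (S ∪ A l) ≤ (S.card : ℤ) + ∑ l, ((A l).card : ℤ) ∧
          ∀ i ∈ J, r i (insert e (S ∪ A i)) ≤ r i (S ∪ A i) := by
        have marg : ∀ i (S T : Finset α), S ⊆ T → 
            r i (insert e (S ∪ A i)) ≤ r i (S ∪ A i) →
            r i (insert e (T ∪ A i)) ≤ r i (T ∪ A i) := by
          intro i S T hST hle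
          have s := sub i (insert e (S ∪ A i)) (T ∪ A i)
          have hu : insert e (S ∪ A i) ∪ (T ∪ A i) = insert e (T ∪ A i) := by
            ext x; simp; have := @hST x; tauto
          have hi : S ∪ A i ⊆ insert e (S ∪ A i) ∩ (T ∪ A i) := by
            intro x; simp; have := @hST x; tauto
          rw [hu] at s
          have := mono i _ _ hi
          linarith
        intro J
        induction J using Finset.induction_on with
        | empty =>
          obtain ⟨S, h1, h2, h3⟩ := hS (Classical.arbitrary ι)
          exact ⟨S, h1, h2, by simp⟩
        | insert j J hj ihJ =>
          obtain ⟨S, h1, h2, h3⟩ := ihJ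
          obtain ⟨T, k1, k2, k3⟩ := hS j
          refine ⟨S ∪ T, Finset.union_subset h1 k1, ?_, ?_⟩
          · have hint := h (S ∩ T) ((Finset.inter_subset_left.trans h1).trans
              (Finset.subset_insert _ _))
            have hs : ∑ l, r l (S ∪ T ∪ A l) + ∑ l, r l (S ∩ T ∪ A l) ≤
                ∑ l, r l (S ∪ A l) + ∑ l, r l (T ∪ A l) := by
              rw [← Finset.sum_add_distrib, ← Finset.sum_add_distrib]
              refine Finset.sum_le_sum fun l _ => ?_
              have := sub l (S ∪ A l) (T ∪ A l)
              rwa [← Finset.union_union_distrib_right, ← Finset.inter_union_distrib_right] at this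
            have hcard : ((S ∪ T).card : ℤ) + (S ∩ T).card = S.card + T.card := by
              exact_mod_cast Finset.card_union_add_card_inter S T
            linarith
          · intro i hi
            rcases Finset.mem_insert.1 hi with rfl | hi
            · exact marg _ T _ Finset.subset_union_right k3
            · exact marg _ S _ Finset.subset_union_left (h3 i hi)
      obtain ⟨S, h1, h2, h3⟩ := key Finset.univ
      have hh := h (insert e S) (Finset.insert_subset_insert _ h1)
      rw [Finset.card_insert_of_notMem (fun hx => he (h1 hx))] at hh
      have : ∑ l, r l (insert e S ∪ A l) ≤ ∑ l, r l (S ∪ A l) := by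
        refine Finset.sum_le_sum fun l _ => ?_
        rw [Finset.insert_union]
        exact h3 l (Finset.mem_univ _)
      push_cast at hh
      linarith

/-- Combinatorial core, for an abstract matroid rank function. -/
theorem aux_core {α : Type*} [DecidableEq α] (t : ℕ) (ht : 2 ≤ t) (r : Finset α → ℤ)
    (r0 : r ∅ = 0)
    (mono : ∀ S T, S ⊆ T → r S ≤ r T)
    (sub : ∀ S T, r (S ∪ T) + r (S ∩ T) ≤ r S + r T)
    (unit : ∀ S, r S ≤ S.card)
    (E : Finset α) (hE : (E.card : ℤ) + 1 ≤ t * r E) :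
    ∃ j ∈ E, ∃ B : Fin t → Finset α, ∃ U : Finset α, (U.card : ℤ) ≤ t - 1 ∧
      (∀ i, r (B i) < r (insert j (B i))) ∧ ∀ e ∈ E, e ∈ U ∨ ∃ i, e ∈ B i := by
  have hsubadd : ∀ S T, r (S ∪ T) ≤ r S + T.card := by
    intro S T
    have h1 := sub S T
    have h2 := unit T
    have h3 := mono ∅ (S ∩ T) (Finset.empty_subset _)
    linarith
  obtain ⟨G, hG, hmax⟩ := Finset.exists_max_image
    (E.powerset.filter fun G => (t : ℤ) * r G - G.card ≤ 0) Finset.card ⟨∅, by simp [r0]⟩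
  simp only [Finset.mem_filter, Finset.mem_powerset] at hG hmax
  obtain ⟨hGE, hG0⟩ := hG
  have hbig : ∀ T ⊆ E, G ⊂ T → (T.card : ℤ) + 1 ≤ t * r T := by
    intro T hTE hGT
    by_contra hcon
    have := hmax T ⟨hTE, by linarith⟩
    have := Finset.card_lt_card hGT
    omega
  have hne : G ≠ E := by
    rintro rfl
    linarith
  obtain ⟨j, hjE, hjG⟩ := Finset.exists_of_ssubset (hGE.ssubset_of_ne hne)
  have hj1 := hbig (insert j G) (Finset.insert_subset hjE hGE) (Finset.ssubset_insert hjG)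
  rw [Finset.card_insert_of_notMem hjG] at hj1
  push_cast at hj1
  have htpos : (0 : ℤ) < t := by positivity
  have hrj : r (insert j G) = r G + 1 := by
    apply le_antisymm
    · have := hsubadd G {j}
      rw [Finset.union_comm, ← Finset.insert_eq] at this
      simpa using this
    · have : (t : ℤ) * r G < t * r (insert j G) := by linarith
      have := lt_of_mul_lt_mul_left this htpos.le
      linarith
  let ρ : Option (Fin t) → Finset α → ℤ := fun o S =>
    match o with
    | none => min (S.card : ℤ) ((t : ℤ) - 2)
    | some _ => r (S ∪ insert j G) - r (insert j G)
  have hρmono : ∀ o S T, S ⊆ T → ρ o S ≤ ρ o T := by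
    rintro (_ | i) S T hST
    · have := Finset.card_le_card hST
      simp only [ρ]
      omega
    · have := mono (S ∪ insert j G) (T ∪ insert j G) (Finset.union_subset_union_left hST)
      simp only [ρ]
      linarith
  have hρsub : ∀ o S T, ρ o (S ∪ T) + ρ o (S ∩ T) ≤ ρ o S + ρ o T := by
    rintro (_ | i) S T
    · have h1 := Finset.card_union_add_card_inter S T
      have h2 := Finset.card_le_card (Finset.inter_subset_left : S ∩ T ⊆ S)
      have h3 := Finset.card_le_card (Finset.inter_subset_right : S ∩ T ⊆ T)
      simp only [ρ]
      omega
    · have := sub (S ∪ insert j G) (T ∪ insert j G)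
      rw [← Finset.union_union_distrib_right, ← Finset.inter_union_distrib_right] at this
      simp only [ρ]
      linarith
  have hρle : ∀ o S, ρ o S ≤ S.card := by
    rintro (_ | i) S
    · simp only [ρ]
      omega
    · have := hsubadd (insert j G) S
      rw [Finset.union_comm] at this
      simp only [ρ]
      linarith
  obtain ⟨B, -, hcov, hsum⟩ := aux_part ρ hρmono hρsub (E \ insert j G) (fun _ => ∅) (by
    intro S hS
    have hSE : S ⊆ E := hS.trans Finset.sdiff_subset
    have hdisj : Disjoint S (insert j G) :=
      Finset.disjoint_of_subset_left hS Finset.sdiff_disjoint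
    have hT := hbig (S ∪ insert j G)
      (Finset.union_subset hSE (Finset.insert_subset hjE hGE))
      ((Finset.ssubset_insert hjG).trans_subset Finset.subset_union_right)
    rw [Finset.card_union_of_disjoint hdisj, Finset.card_insert_of_notMem hjG] at hT
    have hm := mono (insert j G) (S ∪ insert j G) Finset.subset_union_right
    have hm' : 0 ≤ (t : ℤ) * (r (S ∪ insert j G) - r (insert j G)) :=
      mul_nonneg htpos.le (by linarith)
    simp only [Fintype.sum_option, ρ, Finset.union_empty, Finset.card_empty, Finset.sum_const,
      Finset.card_univ, Fintype.card_fin, nsmul_eq_mul]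
    push_cast at hT ⊢
    rcases min_choice (S.card : ℤ) ((t : ℤ) - 2) with h | h
    · rw [h]; linarith
    · rw [h, hrj]; linarith)
  have heq : ∀ o, ρ o (B o) = (B o).card := by
    intro o
    by_contra hcon
    have := Finset.sum_lt_sum (s := Finset.univ) (f := fun o => ρ o (B o))
      (g := fun o => ((B o).card : ℤ)) (fun o _ => hρle o _)
      ⟨o, Finset.mem_univ _, lt_of_le_of_ne (hρle o _) hcon⟩
    linarith
  refine ⟨j, hjE, fun i => B (some i) ∪ G, insert j (B none), ?_, ?_, ?_⟩
  · have h1 := heq none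
    have h2 := Finset.card_insert_le j (B none)
    simp only [ρ] at h1
    omega
  · intro i
    have h1 := heq (some i)
    have h2 := hsubadd G (B (some i))
    simp only [ρ, Finset.union_insert] at h1
    rw [Finset.union_comm] at h2
    linarith
  · intro e he
    by_cases hej : e = j
    · left; simp [hej]
    by_cases heG : e ∈ G
    · right
      exact ⟨⟨0, by omega⟩, by simp [heG]⟩
    obtain ⟨o, ho⟩ := hcov e (by simp [he, hej, heG])
    rcases o with _ | i
    · left; simp [ho]
    · right; exact ⟨i, by simp [ho]⟩

theorem aux_pow {F : Type*} [Field F] {n : ℕ} (C : Submodule F (Fin n → F)) :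
    ∀ (t : ℕ) (c : Fin (t + 1) → (Fin n → F)), (∀ i, c i ∈ C) → ∏ i, c i ∈ powCode F C (t + 1)
  | 0, c, h => by simpa [powCode] using h 0
  | t + 1, c, h => by
    rw [Fin.prod_univ_castSucc]
    exact Submodule.subset_span ⟨_, aux_pow C t _ (fun i => h _), _, h _, rfl⟩

theorem aux_sep {F V : Type*} [Field F] [AddCommGroup V] [Module F V] [FiniteDimensional F V]
    (W : Submodule F (Module.Dual F V)) (φ : Module.Dual F V) (h : φ ∉ W) :
    ∃ c : V, (∀ ψ ∈ W, ψ c = 0) ∧ φ c ≠ 0 := by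
  by_contra hcon
  push Not at hcon
  apply h
  rw [← Subspace.dualCoannihilator_dualAnnihilator_eq (W := W), Submodule.mem_dualAnnihilator]
  intro c hc
  exact hcon c ((Submodule.mem_dualCoannihilator _).1 hc)

/-- Rank function of a finite vector configuration. -/
def rk {F V : Type*} [Field F] [AddCommGroup V] [Module F V] {α : Type*} (v : α → V)
    (S : Finset α) : ℕ := Module.finrank F (Submodule.span F (v '' (S : Set α)))

theorem aux_basis {F V : Type*} [Field F] [AddCommGroup V] [Module F V] [FiniteDimensional F V]
    {α : Type*} [DecidableEq α] (v : α → V)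
    (hv : Submodule.span F (Set.range v) = ⊤) :
    ∃ S : Finset α, S.card = Module.finrank F V ∧
      rk (F := F) v S = Module.finrank F V := by
  obtain ⟨b, hb1, hb2, hb3⟩ := exists_linearIndependent F (Set.range v)
  rw [hv] at hb2
  have hfin : b.Finite := hb3.setFinite
  have : Fintype b := hfin.fintype
  choose g hg using hb1
  have hinj : Function.Injective (fun x : b => g x.2) := by
    intro x y hxy
    have := congrArg v hxy
    simp only [hg] at this
    exact Subtype.ext this
  refine ⟨Finset.univ.image (fun x : b => g x.2), ?_, ?_⟩
  · rw [Finset.card_image_of_injective _ hinj, Finset.card_univ]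
    rw [← finrank_top F V, ← hb2, ← Set.toFinset_card]
    exact (finrank_span_set_eq_card hb3).symm
  · have : v '' ((Finset.univ.image (fun x : b => g x.2) : Finset α) : Set α) = b := by
      ext y
      simp only [Finset.coe_image, Finset.coe_univ, Set.image_univ, Set.mem_image, Set.mem_range]
      constructor
      · rintro ⟨_, ⟨x, rfl⟩, rfl⟩
        rw [hg]; exact x.2
      · intro hy
        exact ⟨_, ⟨⟨y, hy⟩, rfl⟩, hg hy⟩
    rw [rk, this, hb2, finrank_top]

theorem stmt7 {F : Type*} [Field F] [Fintype F] [DecidableEq F] {n t k : ℕ}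
    (ht : 2 ≤ t) (C : Submodule F (Fin n → F)) (hk : Module.finrank F C = k)
    (hne : powCode F C t ≠ ⊥) :
    dmin (powCode F C t) ≤ max (t - 1) (n + t - t * k) := by
  classical
  obtain ⟨s, rfl⟩ : ∃ s, t = s + 1 := ⟨t - 1, by omega⟩
  have hkpos : 1 ≤ k := by
    by_contra hk0
    have hk1 : Module.finrank F C = 0 := by omega
    have hC : C = ⊥ := Submodule.finrank_eq_zero.1 hk1
    apply hne
    obtain ⟨u, rfl⟩ : ∃ u, s = u + 1 := ⟨s - 1, by omega⟩
    rw [eq_bot_iff]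
    show prodCode F _ C ≤ ⊥
    rw [prodCode, Submodule.span_le]
    rintro z ⟨c, -, c', hc', rfl⟩
    rw [hC, Submodule.mem_bot] at hc'
    simp [hc']
  let v : Fin n → Module.Dual F C := fun j => (LinearMap.proj j).comp C.subtype
  have hvapp : ∀ j (c : C), v j c = (c : Fin n → F) j := fun j c => rfl
  have hspan : Submodule.span F (Set.range v) = ⊤ := by
    by_contra hcon
    obtain ⟨φ, hφ⟩ : ∃ φ, φ ∉ Submodule.span F (Set.range v) := by
      by_contra h
      push Not at h
      exact hcon (eq_top_iff.2 fun x _ => h x)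
    obtain ⟨c, hc1, hc2⟩ := aux_sep _ φ hφ
    have : c = 0 := by
      ext j
      exact hc1 (v j) (Submodule.subset_span ⟨j, rfl⟩)
    simp [this] at hc2
  have hdual : Module.finrank F (Module.Dual F C) = k := by
    rw [Subspace.dual_finrank_eq, hk]
  have rmono : ∀ S T : Finset (Fin n), S ⊆ T → rk (F := F) v S ≤ rk (F := F) v T := by
    intro S T h
    exact Submodule.finrank_mono (Submodule.span_mono (Set.image_mono (by exact_mod_cast h)))
  have rsub : ∀ S T : Finset (Fin n), rk (F := F) v (S ∪ T) + rk (F := F) v (S ∩ T) ≤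
      rk (F := F) v S + rk (F := F) v T := by
    intro S T
    have h1 := Submodule.finrank_sup_add_finrank_inf_eq
      (Submodule.span F (v '' (S : Set (Fin n)))) (Submodule.span F (v '' (T : Set (Fin n))))
    have h2 : rk (F := F) v (S ∩ T) ≤ Module.finrank F
        ((Submodule.span F (v '' (S : Set (Fin n))) ⊓
          Submodule.span F (v '' (T : Set (Fin n))) : Submodule F (Module.Dual F C))) := by
      apply Submodule.finrank_mono
      refine le_inf (Submodule.span_mono (Set.image_mono ?_))
        (Submodule.span_mono (Set.image_mono ?_))
      · exact_mod_cast Finset.inter_subset_left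
      · exact_mod_cast Finset.inter_subset_right
    rw [← Submodule.span_union, ← Set.image_union, ← Finset.coe_union] at h1
    unfold rk at h2 ⊢
    omega
  have runit : ∀ S : Finset (Fin n), rk (F := F) v S ≤ S.card := by
    intro S
    have h1 := finrank_span_finset_le_card (R := F) (S.image v)
    rw [Set.finrank, Finset.coe_image] at h1
    exact h1.trans Finset.card_image_le
  obtain ⟨E0, hE0c, hE0r⟩ := aux_basis (F := F) v hspan
  rw [hdual] at hE0c hE0r
  have hkn : k ≤ n := by
    have := Finset.card_le_univ E0
    simpa [hE0c] using this
  obtain ⟨E, hE1, hE2⟩ : ∃ E : Finset (Fin n), E.card + 1 ≤ (s + 1) * rk (F := F) v E ∧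
      n - E.card + s ≤ max (s + 1 - 1) (n + (s + 1) - (s + 1) * k) := by
    have hlb : 2 * k ≤ (s + 1) * k := Nat.mul_le_mul_right k ht
    by_cases hcase : n + 1 ≤ (s + 1) * k
    · refine ⟨Finset.univ, ?_, ?_⟩
      · have := rmono E0 Finset.univ (Finset.subset_univ _)
        rw [hE0r] at this
        have := Nat.mul_le_mul_left (s + 1) this
        simp
        omega
      · simp
    · obtain ⟨E, hEE, -, hEc⟩ := Finset.exists_subsuperset_card_eq
        (Finset.subset_univ E0) (n := (s + 1) * k - 1) (by omega) (by simp; omega)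
      refine ⟨E, ?_, ?_⟩
      · have := rmono E0 E hEE
        rw [hE0r] at this
        have := Nat.mul_le_mul_left (s + 1) this
        omega
      · omega
  obtain ⟨j, hjE, B, U, hU, hB, hcov⟩ := aux_core (s + 1) ht (fun S => (rk (F := F) v S : ℤ))
    (by simp [rk]) (fun S T h => by exact_mod_cast rmono S T h)
    (fun S T => by exact_mod_cast rsub S T) (fun S => by exact_mod_cast runit S)
    E (by exact_mod_cast hE1)
  have hc : ∀ i, ∃ c : C, (∀ e ∈ B i, (c : Fin n → F) e = 0) ∧ (c : Fin n → F) j ≠ 0 := by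
    intro i
    obtain ⟨c, hc1, hc2⟩ := aux_sep (Submodule.span F (v '' (B i : Set (Fin n)))) (v j) (by
      intro hmem
      have h1 : rk (F := F) v (insert j (B i)) = rk (F := F) v (B i) := by
        unfold rk
        rw [Finset.coe_insert, Set.image_insert_eq, Submodule.span_insert_eq_span hmem]
      have := hB i
      simp [h1] at this)
    exact ⟨c, fun e he => hc1 (v e) (Submodule.subset_span ⟨e, by exact_mod_cast he, rfl⟩), hc2⟩
  choose c hc1 hc2 using hc
  have hmem := aux_pow C s (fun i => (c i : Fin n → F)) (fun i => (c i).2)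
  have hnz : (∏ i, (c i : Fin n → F)) ≠ 0 := by
    intro h
    have := congrFun h j
    rw [Finset.prod_apply, Pi.zero_apply, Finset.prod_eq_zero_iff] at this
    obtain ⟨i, -, hi⟩ := this
    exact hc2 i hi
  refine le_trans (Nat.sInf_le ⟨_, hmem, hnz, rfl⟩) (le_trans ?_ hE2)
  have hsupp : (Finset.univ.filter fun e => (∏ i, (c i : Fin n → F)) e ≠ 0) ⊆ Eᶜ ∪ U := by
    intro e he
    rw [Finset.mem_filter] at he
    by_cases heE : e ∈ E
    · rcases hcov e heE with h | ⟨i, hi⟩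
      · simp [h]
      · exfalso
        apply he.2
        rw [Finset.prod_apply]
        exact Finset.prod_eq_zero (Finset.mem_univ i) (hc1 i e hi)
    · simp [heE]
  have h1 := (Finset.card_le_card hsupp).trans (Finset.card_union_le _ _)
  rw [Finset.card_compl, Fintype.card_fin] at h1
  have h2 : U.card ≤ s := by
    push_cast at hU
    omega
  unfold hammingNorm
  omega


end
end

section
/- For a prime power q and integers n ≥ d ≥ 1 with d ≤ t, the maximum dimension k of a linear code C ⊆ F_q^n with dmin(C^(t)) ≥ d equals floor(n/d); that is, a_q^(t)(n,d) = ⌊n/d⌋ for 1 ≤ d ≤ t ≤ n. -/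
noncomputable section

structure RankFn {α : Type*} [DecidableEq α] (r : Finset α → ℕ) : Prop where
  empty : r ∅ = 0
  ins : ∀ A e, r (insert e A) ≤ r A + 1
  mono : ∀ A B, A ⊆ B → r A ≤ r B
  sub : ∀ A B, r (A ∪ B) + r (A ∩ B) ≤ r A + r B

theorem RankFn.le_card {α : Type*} [DecidableEq α] {r : Finset α → ℕ} (h : RankFn r)
    (A : Finset α) : r A ≤ A.card := by
  induction A using Finset.induction_on with
  | empty => simp [h.empty]
  | insert a s ha ih =>
    rw [Finset.card_insert_of_notMem ha]
    have := h.ins s a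
    omega

theorem RankFn.contract {α : Type*} [DecidableEq α] {r : Finset α → ℕ} (h : RankFn r)
    (e : α) (he : r {e} = 1) : RankFn (fun A => r (insert e A) - 1) := by
  have h1 : ∀ A, 1 ≤ r (insert e A) := fun A => by
    rw [← he]; exact h.mono _ _ (by simp)
  refine ⟨by simp [he], ?_, ?_, ?_⟩
  · intro A f
    have := h.ins (insert e A) f
    rw [Finset.insert_comm] at this
    have := h1 A
    try simp only
    omega
  · intro A B hAB
    have := h.mono _ _ (Finset.insert_subset_insert e hAB)
    try simp only
    omega
  · intro A B
    have h2 := h.sub (insert e A) (insert e B)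
    rw [← Finset.insert_union_distrib, ← Finset.insert_inter_distrib] at h2
    have := h1 A
    have := h1 B
    have := h1 (A ∪ B)
    have := h1 (A ∩ B)
    try simp only
    omega

/-- Matroid intersection theorem for rank functions. -/
theorem rank_intersection {α : Type*} [DecidableEq α] (E : Finset α) :
    ∀ (r1 r2 : Finset α → ℕ) (_ : RankFn r1) (_ : RankFn r2) (k : ℕ)
      (_ : ∀ A ⊆ E, k ≤ r1 A + r2 (E \ A)),
      ∃ I ⊆ E, I.card = k ∧ r1 I = k ∧ r2 I = k := by
  induction E using Finset.induction_on with
  | empty =>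
    intro r1 r2 h1 h2 k hk
    have := hk ∅ (by simp)
    simp [h1.empty, h2.empty] at this
    subst this
    exact ⟨∅, by simp, by simp, h1.empty, h2.empty⟩
  | insert e E he ih =>
    intro r1 r2 h1 h2 k hk
    by_cases hdel : ∀ A ⊆ E, k ≤ r1 A + r2 (E \ A)
    · obtain ⟨I, hI, h⟩ := ih r1 r2 h1 h2 k hdel
      exact ⟨I, hI.trans (Finset.subset_insert _ _), h⟩
    push Not at hdel
    obtain ⟨A, hA, hAk⟩ := hdel
    have heA : e ∉ A := fun h => he (hA h)
    have a1 := hk A (hA.trans (Finset.subset_insert _ _))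
    have a2 := hk (insert e A) (Finset.insert_subset_insert _ hA)
    have s1 : insert e E \ A = insert e (E \ A) := Finset.insert_sdiff_of_notMem _ heA
    have s2 : insert e E \ insert e A = E \ A := by
      ext x; simp only [Finset.mem_sdiff, Finset.mem_insert]; grind
    rw [s1] at a1
    rw [s2] at a2
    have nl : ∀ (r : Finset α → ℕ), RankFn r → ∀ X, r X < r (insert e X) → r {e} = 1 := by
      intro r h X hX
      have b1 := h.sub {e} X
      have b2 := h.ins ∅ e
      rw [← Finset.insert_eq] at b1
      simp [h.empty] at b2
      omega
    have e1 := nl r1 h1 A (by omega)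
    have e2 := nl r2 h2 (E \ A) (by omega)
    have c1 : ∀ X, 1 ≤ r1 (insert e X) := fun X => by
      rw [← e1]; exact h1.mono _ _ (by simp)
    have c2 : ∀ X, 1 ≤ r2 (insert e X) := fun X => by
      rw [← e2]; exact h2.mono _ _ (by simp)
    obtain ⟨I, hI, hc, hr1, hr2⟩ := ih _ _ (h1.contract e e1) (h2.contract e e2) (k - 1) (by
      intro B hB
      have heB : e ∉ B := fun h => he (hB h)
      have f1 := h1.sub A (insert e B)
      have f2 := h2.sub (E \ A) (insert e (E \ B))
      have g1 := hk (A ∩ B) ((Finset.inter_subset_left.trans hA).trans (Finset.subset_insert _ _))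
      have g2 := hk (insert e (A ∪ B)) (Finset.insert_subset_insert _ (Finset.union_subset hA hB))
      have t1 : A ∩ insert e B = A ∩ B := by grind
      have t2 : A ∪ insert e B = insert e (A ∪ B) := by grind
      have t3 : (E \ A) ∪ insert e (E \ B) = insert e E \ (A ∩ B) := by grind
      have t4 : (E \ A) ∩ insert e (E \ B) = insert e E \ (insert e (A ∪ B)) := by grind
      rw [t1, t2] at f1
      rw [t3, t4] at f2
      have := c1 B
      have := c2 (E \ B)
      omega)
    have := c1 I
    have := c2 I
    have heI : e ∉ I := fun h => he (hI h)
    refine ⟨insert e I, Finset.insert_subset_insert _ hI, ?_, ?_, ?_⟩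
    · rw [Finset.card_insert_of_notMem heI]; omega
    · omega
    · omega

/-- The subcode vanishing on `S`. -/
def shortCode (F : Type*) [Field F] {n : ℕ} (C : Submodule F (Fin n → F)) (S : Finset (Fin n)) :
    Submodule F (Fin n → F) where
  carrier := {c | c ∈ C ∧ ∀ i ∈ S, c i = 0}
  zero_mem' := ⟨C.zero_mem, by simp⟩
  add_mem' := by
    intro a b ha hb
    exact ⟨C.add_mem ha.1 hb.1, fun i hi => by simp [ha.2 i hi, hb.2 i hi]⟩
  smul_mem' := by
    intro r a ha
    exact ⟨C.smul_mem r ha.1, fun i hi => by simp [ha.2 i hi]⟩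

theorem mem_shortCode {F : Type*} [Field F] {n : ℕ} {C : Submodule F (Fin n → F)}
    {S : Finset (Fin n)} {c : Fin n → F} :
    c ∈ shortCode F C S ↔ c ∈ C ∧ ∀ i ∈ S, c i = 0 := Iff.rfl

theorem shortCode_le {F : Type*} [Field F] {n : ℕ} (C : Submodule F (Fin n → F))
    (S : Finset (Fin n)) : shortCode F C S ≤ C := fun _ h => h.1

theorem finrank_shortCode_insert {F : Type*} [Field F] {n : ℕ} (C : Submodule F (Fin n → F))
    (S : Finset (Fin n)) (e : Fin n) :
    Module.finrank F (shortCode F C S) ≤ Module.finrank F (shortCode F C (insert e S)) + 1 := by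
  let f : shortCode F C S →ₗ[F] F := (LinearMap.proj e).comp (shortCode F C S).subtype
  have h1 := LinearMap.finrank_range_add_finrank_ker f
  have h2 : Module.finrank F (LinearMap.range f) ≤ 1 := by
    simpa using Submodule.finrank_le (LinearMap.range f)
  have h3 : Module.finrank F (LinearMap.ker f) ≤
      Module.finrank F (shortCode F C (insert e S)) := by
    let g : LinearMap.ker f →ₗ[F] shortCode F C (insert e S) :=
      LinearMap.codRestrict _ ((shortCode F C S).subtype.comp (LinearMap.ker f).subtype) (by
        rintro ⟨⟨c, hc⟩, hk⟩
        refine ⟨hc.1, fun i hi => ?_⟩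
        rcases Finset.mem_insert.1 hi with rfl | hi
        · exact hk
        · exact hc.2 i hi)
    refine LinearMap.finrank_le_finrank_of_injective (f := g) ?_
    intro a b hab
    have := congrArg Subtype.val hab
    exact Subtype.ext (Subtype.ext this)
  omega

theorem rankFn_code {F : Type*} [Field F] {n : ℕ} (C : Submodule F (Fin n → F)) :
    RankFn (fun S => Module.finrank F C - Module.finrank F (shortCode F C S)) := by
  have hle : ∀ S, Module.finrank F (shortCode F C S) ≤ Module.finrank F C :=
    fun S => Submodule.finrank_mono (shortCode_le C S)
  have hmono : ∀ A B : Finset (Fin n), A ⊆ B → shortCode F C B ≤ shortCode F C A :=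
    fun A B h c hc => ⟨hc.1, fun i hi => hc.2 i (h hi)⟩
  refine ⟨?_, ?_, ?_, ?_⟩
  · have : shortCode F C ∅ = C := by ext c; simp [mem_shortCode]
    rw [this, Nat.sub_self]
  · intro A e
    have := finrank_shortCode_insert C A e
    have := hle A
    try simp only
    omega
  · intro A B h
    have := Submodule.finrank_mono (hmono A B h)
    try simp only
    omega
  · intro A B
    have h1 := Submodule.finrank_sup_add_finrank_inf_eq (shortCode F C A) (shortCode F C B)
    have h2 : shortCode F C A ⊓ shortCode F C B = shortCode F C (A ∪ B) := by
      ext c; simp only [Submodule.mem_inf, mem_shortCode, Finset.mem_union]; grind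
    have h3 := Submodule.finrank_mono (sup_le (hmono (A ∩ B) A Finset.inter_subset_left)
      (hmono (A ∩ B) B Finset.inter_subset_right))
    rw [h2] at h1
    have := hle A
    have := hle B
    have := hle (A ∩ B)
    have := hle (A ∪ B)
    try simp only
    omega

/-- The slice of a set of pairs. -/
def slice {n d : ℕ} (A : Finset (Fin n × Fin d)) (i : Fin d) : Finset (Fin n) :=
  Finset.univ.filter (fun e => (e, i) ∈ A)

theorem mem_slice {n d : ℕ} {A : Finset (Fin n × Fin d)} {i : Fin d} {e : Fin n} :
    e ∈ slice A i ↔ (e, i) ∈ A := by simp [slice]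

theorem sum_card_slice {n d : ℕ} (A : Finset (Fin n × Fin d)) :
    ∑ i, (slice A i).card = A.card := by
  rw [Finset.card_eq_sum_card_fiberwise (f := Prod.snd) (t := Finset.univ) (by simp)]
  refine Finset.sum_congr rfl fun i _ => ?_
  refine Finset.card_bij (fun e _ => (e, i)) ?_ ?_ ?_
  · intro e he; simpa using mem_slice.1 he
  · intro a _ b _ h; simpa using h
  · rintro ⟨e, i'⟩ h
    simp at h
    obtain ⟨h, rfl⟩ := h
    exact ⟨e, mem_slice.2 h, rfl⟩

theorem rankFn_sum {n d : ℕ} {r : Finset (Fin n) → ℕ} (h : RankFn r) :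
    RankFn (fun A : Finset (Fin n × Fin d) => ∑ i, r (slice A i)) := by
  refine ⟨?_, ?_, ?_, ?_⟩
  · have : ∀ i : Fin d, slice (∅ : Finset (Fin n × Fin d)) i = ∅ := by
      intro i; ext; simp [mem_slice]
    simp [this, h.empty]
  · rintro A ⟨e, j⟩
    have : ∀ i, r (slice (insert (e, j) A) i) ≤ r (slice A i) + if i = j then 1 else 0 := by
      intro i
      split_ifs with hij
      · subst hij
        have : slice (insert (e, i) A) i = insert e (slice A i) := by
          ext; simp [mem_slice]
        rw [this]; exact h.ins _ _
      · have : slice (insert (e, j) A) i = slice A i := by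
          ext; simp [mem_slice, hij]
        rw [this]; simp
    calc _ ≤ ∑ i, (r (slice A i) + if i = j then 1 else 0) := Finset.sum_le_sum fun i _ => this i
      _ = _ := by simp [Finset.sum_add_distrib]
  · intro A B hAB
    exact Finset.sum_le_sum fun i _ => h.mono _ _ fun e he => mem_slice.2 (hAB (mem_slice.1 he))
  · intro A B
    try simp only
    rw [← Finset.sum_add_distrib, ← Finset.sum_add_distrib]
    refine Finset.sum_le_sum fun i _ => ?_
    have h1 : slice (A ∪ B) i = slice A i ∪ slice B i := by ext; simp [mem_slice]
    have h2 : slice (A ∩ B) i = slice A i ∩ slice B i := by ext; simp [mem_slice]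
    rw [h1, h2]
    exact h.sub _ _

theorem rankFn_image {n d : ℕ} :
    RankFn (fun A : Finset (Fin n × Fin d) => (A.image Prod.fst).card) := by
  refine ⟨by simp, ?_, ?_, ?_⟩
  · intro A e
    simp only [Finset.image_insert]
    exact Finset.card_insert_le _ _
  · intro A B h
    exact Finset.card_le_card (Finset.image_subset_image h)
  · intro A B
    have h1 := Finset.card_union_add_card_inter (A.image Prod.fst) (B.image Prod.fst)
    have h2 := Finset.card_le_card (Finset.image_inter_subset Prod.fst A B)
    simp only [Finset.image_union]
    omega

theorem code_bound {F : Type*} [Field F] [DecidableEq F] {n d : ℕ} (hd : 1 ≤ d) (m : ℕ) :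
    ∀ (E : Finset (Fin n)) (_ : E.card = m) (C : Submodule F (Fin n → F))
      (_ : ∀ c ∈ C, ∀ i ∉ E, c i = 0)
      (_ : ∀ c : Fin d → Fin n → F, (∀ i, c i ∈ C) → (∏ i, c i) ≠ 0 →
        d ≤ hammingNorm (∏ i, c i)),
      d * Module.finrank F C ≤ E.card := by
  induction m using Nat.strong_induction_on with
  | _ m ih =>
  intro E hE C hsupp hC
  by_contra hlt
  push Not at hlt
  have hV : ∀ S ⊆ E, S.Nonempty → d * Module.finrank F (shortCode F C S) + S.card ≤ E.card := by
    intro S hS hne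
    have h1 := Finset.card_sdiff_add_card_eq_card hS
    have h2 := hne.card_pos
    have := ih (E \ S).card (by omega) (E \ S) rfl (shortCode F C S) (by
      intro c hc i hi
      by_cases hiS : i ∈ S
      · exact hc.2 i hiS
      · exact hsupp c hc.1 i (fun h => hi (Finset.mem_sdiff.2 ⟨h, hiS⟩)))
      (fun c hc => hC c fun i => (hc i).1)
    omega
  set k := Module.finrank F C with hk
  have hkpos : 0 < k := by
    rcases Nat.eq_zero_or_pos k with h | h
    · rw [h] at hlt; simp at hlt
    · exact h
  obtain ⟨c0, hc0, hc0ne⟩ : ∃ c ∈ C, c ≠ 0 := by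
    rw [← Submodule.ne_bot_iff]
    rintro h
    rw [h] at hk
    simp at hk
    omega
  obtain ⟨j, hj⟩ := Function.ne_iff.1 hc0ne
  have hjE : j ∈ E := by
    by_contra h
    exact hj (hsupp c0 hc0 j h)
  -- the contracted code
  have hC'lt : Module.finrank F (shortCode F C {j}) < k := by
    refine Submodule.finrank_lt_finrank_of_lt (lt_of_le_of_ne (shortCode_le C _) ?_)
    intro h
    rw [← h] at hc0
    exact hj (hc0.2 j (by simp))
  have hC'ge := finrank_shortCode_insert C ∅ j
  have hemp : shortCode F C ∅ = C := by ext c; simp [mem_shortCode]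
  have hins : (insert j ∅ : Finset (Fin n)) = {j} := by simp
  rw [hemp, hins] at hC'ge
  have hC' : Module.finrank F (shortCode F C {j}) = k - 1 := by omega
  have hss : ∀ S, shortCode F (shortCode F C {j}) S = shortCode F C (insert j S) := by
    intro S; ext c; simp [mem_shortCode]; tauto
  have hr := rankFn_code (shortCode F C {j})
  have hrC := rankFn_code C
  rw [hC'] at hr
  have hss' : ∀ S, Module.finrank F (shortCode F (shortCode F C {j}) S) =
      Module.finrank F (shortCode F C (insert j S)) := fun S => by rw [hss]
  simp only [hss'] at hr
  obtain ⟨I, hI, hIc, hI1, hI2⟩ := rank_intersection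
    ((E.erase j) ×ˢ (Finset.univ : Finset (Fin d))) _ _
    (rankFn_sum (d := d) hr) rankFn_image (d * (k - 1)) (by
    intro A hA
    let S : Finset (Fin n) := (E.erase j).filter (fun e => ∀ i, (e, i) ∈ A)
    have hS : S ⊆ E.erase j := Finset.filter_subset _ _
    have hjS : j ∉ S := fun h => by simpa using hS h
    have h1 := hV (insert j S) (Finset.insert_subset hjE (hS.trans (Finset.erase_subset _ _)))
      (by simp)
    rw [Finset.card_insert_of_notMem hjS] at h1
    have h2 : d * (k - 1 - Module.finrank F (shortCode F C (insert j S))) ≤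
        ∑ i : Fin d, (k - 1 - Module.finrank F (shortCode F C (insert j (slice A i)))) := by
      have := Finset.card_nsmul_le_sum (Finset.univ : Finset (Fin d))
        (fun i => (k - 1 - Module.finrank F (shortCode F C (insert j (slice A i)))))
        (k - 1 - Module.finrank F (shortCode F C (insert j S))) (fun i _ =>
          hr.mono S (slice A i) (fun e he => mem_slice.2 ((Finset.mem_filter.1 he).2 i)))
      simpa using this
    have h3 : (((E.erase j) ×ˢ (Finset.univ : Finset (Fin d))) \ A).image Prod.fst =
        E.erase j \ S := by
      ext e
      simp only [Finset.mem_image, Finset.mem_sdiff, Finset.mem_product, Prod.exists, S,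
        Finset.mem_filter, Finset.mem_univ, and_true, exists_and_right, exists_eq_right]
      constructor
      · rintro ⟨i, h, h'⟩
        exact ⟨h, fun h'' => h' (h''.2 i)⟩
      · rintro ⟨h, h'⟩
        have : ∃ i, (e, i) ∉ A := by
          by_contra hh
          push Not at hh
          exact h' ⟨h, hh⟩
        obtain ⟨i, hi⟩ := this
        exact ⟨i, h, hi⟩
    have h4 := Finset.card_sdiff_add_card_eq_card hS
    have h5 := Finset.card_erase_add_one hjE
    rw [h3]
    have h6 : d * (k - 1) ≤ d * (k - 1 - Module.finrank F (shortCode F C (insert j S))) +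
        d * Module.finrank F (shortCode F C (insert j S)) := by
      rw [← Nat.mul_add]
      exact Nat.mul_le_mul_left _ (by omega)
    omega)
  have hIi : ∀ i, (k - 1 - Module.finrank F (shortCode F C (insert j (slice I i)))) = k - 1 := by
    have := (Finset.sum_eq_sum_iff_of_le (s := (Finset.univ : Finset (Fin d)))
      (f := fun i => (k - 1 - Module.finrank F (shortCode F C (insert j (slice I i)))))
      (g := fun _ => k - 1) (fun i _ => Nat.sub_le _ _)).1 (by rw [hI1]; simp)
    exact fun i => this i (Finset.mem_univ i)
  have hIcard : ∀ i, k - 1 = (slice I i).card := by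
    have := (Finset.sum_eq_sum_iff_of_le (s := (Finset.univ : Finset (Fin d)))
      (f := fun _ => k - 1) (g := fun i => (slice I i).card) (fun i _ => by
        have := hr.le_card (slice I i)
        have h2 := hIi i
        omega)).1 (by rw [sum_card_slice, hIc]; simp)
    exact fun i => this i (Finset.mem_univ i)
  have hex : ∀ i, ∃ c ∈ C, (∀ e ∈ slice I i, c e = 0) ∧ c j ≠ 0 := by
    intro i
    have h1 := hrC.le_card (slice I i)
    have h1' := hrC.le_card (insert j (slice I i))
    have h2 := hIcard i
    have h3 := hIi i
    have hle1 : Module.finrank F (shortCode F C (insert j (slice I i))) ≤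
        Module.finrank F (shortCode F C {j}) := Submodule.finrank_mono (by
          intro c hc
          exact ⟨hc.1, fun a ha => hc.2 a (by simp at ha; simp [ha])⟩)
    have hlt : Module.finrank F (shortCode F C (insert j (slice I i))) <
        Module.finrank F (shortCode F C (slice I i)) := by
      omega
    by_contra hno
    push Not at hno
    refine absurd (Submodule.finrank_mono (s := shortCode F C (slice I i))
      (t := shortCode F C (insert j (slice I i))) ?_) (by omega)
    intro c hc
    refine ⟨hc.1, fun a ha => ?_⟩
    rcases Finset.mem_insert.1 ha with rfl | ha
    · exact hno c hc.1 hc.2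
    · exact hc.2 a ha
  choose c hcC hcz hcj using hex
  have hzj : (∏ i, c i) j ≠ 0 := by
    rw [Finset.prod_apply]
    exact Finset.prod_ne_zero_iff.2 fun i _ => hcj i
  have hw := hC c hcC (fun h => hzj (by rw [h]; rfl))
  have hsub : (Finset.univ.filter fun e => (∏ i, c i) e ≠ 0) ⊆ E \ (I.image Prod.fst) := by
    intro e he
    have he' : (∏ i, c i) e ≠ 0 := by simpa using he
    rw [Finset.prod_apply] at he'
    rw [Finset.prod_ne_zero_iff] at he'
    refine Finset.mem_sdiff.2 ⟨?_, ?_⟩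
    · by_contra h
      exact he' ⟨0, hd⟩ (Finset.mem_univ _) (hsupp _ (hcC _) e h)
    · intro h
      obtain ⟨⟨e', i⟩, hi, rfl⟩ := Finset.mem_image.1 h
      exact he' i (Finset.mem_univ _) (hcz i _ (mem_slice.2 hi))
  have hcard := Finset.card_le_card hsub
  have hIE : I.image Prod.fst ⊆ E := by
    intro e he
    obtain ⟨x, hx, rfl⟩ := Finset.mem_image.1 he
    exact Finset.mem_of_mem_erase (Finset.mem_product.1 (hI hx)).1
  have hcs := Finset.card_sdiff_add_card_eq_card hIE
  have hw' : d ≤ (Finset.univ.filter fun e => (∏ i, c i) e ≠ 0).card := hw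
  have hdk : d * k = d * (k - 1) + d := by
    rw [← Nat.mul_succ]; congr 1; omega
  omega

theorem mul_mem_powCode {F : Type*} [Field F] {n : ℕ} {C : Submodule F (Fin n → F)} {s : ℕ}
    {z c : Fin n → F} (hz : z ∈ powCode F C (s + 1)) (hc : c ∈ C) :
    z * c ∈ powCode F C (s + 2) :=
  Submodule.subset_span ⟨z, hz, c, hc, rfl⟩

theorem prod_mem_powCode {F : Type*} [Field F] {n : ℕ} {C : Submodule F (Fin n → F)} (s : ℕ)
    (c : Fin (s + 1) → Fin n → F) (hc : ∀ i, c i ∈ C) : ∏ i, c i ∈ powCode F C (s + 1) := by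
  induction s with
  | zero => simpa [powCode] using hc 0
  | succ s ih =>
    rw [Fin.prod_univ_castSucc]
    exact mul_mem_powCode (ih _ fun i => hc _) (hc _)

theorem mul_pow_mem_powCode {F : Type*} [Field F] {n : ℕ} {C : Submodule F (Fin n → F)} {s : ℕ}
    {z c : Fin n → F} (hz : z ∈ powCode F C (s + 1)) (hc : c ∈ C) (m : ℕ) :
    z * c ^ m ∈ powCode F C (s + m + 1) := by
  induction m with
  | zero => simpa using hz
  | succ m ih =>
    rw [pow_succ, ← mul_assoc]
    exact mul_mem_powCode ih hc

theorem powCode_le {F : Type*} [Field F] {n : ℕ} {C : Submodule F (Fin n → F)}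
    (h : ∀ a ∈ C, ∀ b ∈ C, a * b ∈ C) (s : ℕ) : powCode F C (s + 1) ≤ C := by
  induction s with
  | zero => exact le_rfl
  | succ s ih =>
    refine Submodule.span_le.2 ?_
    rintro _ ⟨a, ha, b, hb, rfl⟩
    exact h a (ih ha) b hb

/-- The map repeating each symbol `d` times. -/
def repMap (F : Type*) [Field F] (n d : ℕ) : (Fin (n / d) → F) →ₗ[F] (Fin n → F) where
  toFun x := fun i => if h : i.1 / d < n / d then x ⟨i.1 / d, h⟩ else 0
  map_add' := by intro x y; ext i; by_cases h : i.1 / d < n / d <;> simp [h]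
  map_smul' := by intro r x; ext i; by_cases h : i.1 / d < n / d <;> simp [h]

theorem repMap_weight {F : Type*} [Field F] [DecidableEq F] {n d : ℕ} (hd : 1 ≤ d)
    (x : Fin (n / d) → F) (hx : x ≠ 0) : d ≤ hammingNorm (repMap F n d x) := by
  obtain ⟨a, ha⟩ := Function.ne_iff.1 hx
  have hlt : ∀ i : Fin d, a.1 * d + i.1 < n := by
    intro i
    have h1 : (a.1 + 1) * d ≤ n / d * d := Nat.mul_le_mul_right _ a.2
    have h2 := Nat.div_mul_le_self n d
    have := i.2
    rw [Nat.add_mul] at h1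
    omega
  have := Finset.card_le_card_of_injOn (s := (Finset.univ : Finset (Fin d)))
    (t := Finset.univ.filter fun e => repMap F n d x e ≠ 0)
    (fun i => ⟨a.1 * d + i.1, hlt i⟩) (by
      intro i _
      have h : (a.1 * d + i.1) / d = a.1 := by
        rw [mul_comm, Nat.mul_add_div (by omega), Nat.div_eq_of_lt i.2, add_zero]
      simp only [Finset.coe_filter, Set.mem_setOf_eq, Finset.mem_univ, true_and]
      simpa [repMap, h] using ha) (by
      intro i _ i' _ h
      simp at h
      exact Fin.ext (by omega))
  simpa [hammingNorm] using this

theorem stmt8 {F : Type*} [Field F] [Fintype F] [DecidableEq F] {n d t : ℕ}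
    (hd : 1 ≤ d) (hdt : d ≤ t) (htn : t ≤ n) :
    IsGreatest {k | ∃ C : Submodule F (Fin n → F), Module.finrank F C = k ∧
      ∀ z ∈ powCode F C t, z ≠ 0 → d ≤ hammingNorm z} (n / d) := by
  constructor
  · refine ⟨LinearMap.range (repMap F n d), ?_, ?_⟩
    · have hinj : Function.Injective (repMap F n d) := by
        rw [← LinearMap.ker_eq_bot, LinearMap.ker_eq_bot']
        intro x hx
        by_contra hne
        have := repMap_weight hd x hne
        rw [hx] at this
        simp at this
        omega
      rw [LinearMap.finrank_range_of_inj hinj]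
      simp
    · intro z hz hne
      obtain ⟨s, rfl⟩ : ∃ s, t = s + 1 := ⟨t - 1, by omega⟩
      have hz' := powCode_le (C := LinearMap.range (repMap F n d)) (by
        rintro _ ⟨x, rfl⟩ _ ⟨y, rfl⟩
        refine ⟨x * y, ?_⟩
        ext i
        by_cases h : i.1 / d < n / d <;> simp [repMap, h]) s hz
      obtain ⟨x, rfl⟩ := hz'
      exact repMap_weight hd x (fun h => hne (by rw [h, map_zero]))
  · rintro k ⟨C, rfl, hC⟩
    have := code_bound (F := F) hd n Finset.univ (by simp) C (by simp) (by
      intro c hc hne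
      obtain ⟨s, rfl⟩ : ∃ s, d = s + 1 := ⟨d - 1, by omega⟩
      obtain ⟨m, rfl⟩ := Nat.exists_eq_add_of_le hdt
      have hmem := mul_pow_mem_powCode (prod_mem_powCode s c hc) (hc 0) m
      have heq : ∀ e, ((∏ i, c i) * c 0 ^ m) e ≠ 0 ↔ (∏ i, c i) e ≠ 0 := by
        intro e
        constructor
        · intro h h'
          exact h (by rw [Pi.mul_apply, h', zero_mul])
        · intro h
          rw [Pi.mul_apply, Pi.pow_apply]
          refine mul_ne_zero h (pow_ne_zero _ ?_)
          rw [Finset.prod_apply, Finset.prod_ne_zero_iff] at h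
          exact h 0 (Finset.mem_univ _)
      have hw : hammingNorm ((∏ i, c i) * c 0 ^ m) = hammingNorm (∏ i, c i) := by
        unfold hammingNorm
        simp only [heq]
      rw [← hw]
      refine hC _ (by rw [show s + 1 + m = s + m + 1 by omega]; exact hmem) ?_
      obtain ⟨e, he⟩ := Function.ne_iff.1 hne
      exact fun h => (heq e).2 he (by rw [h]; rfl))
    rw [Nat.le_div_iff_mul_le (by omega), mul_comm]
    simpa using this

end
end
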